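/- Fix d ≥ 1, an integer L ≥ 2, β > 0, and integers k > ℓ ≥ 1 with γ = 2^{−k} and δ = ℓ/k. Then there is a constant c > 0, depending only on d, β and J, such that for every coarse-grained configuration σ_δ ∈ Ω^{(δ)}_{L,γ}, | log ( Σ_{s ∈ E(σ_δ)} e^{−βH_{γ,L}(s)} ) + β γ^{−d} F(σ_δ) | ≤ c · γ^{−d} L^d ( γ^δ + γ^{d(1−δ)} log(1/γ) ). -/

import Mathlib

open MeasureTheory Real

/-- The `d`-dimensional torus `(ℝ/Lℤ)^d` with its Lebesgue (Haar) measure. -/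
abbrev Torus (d L : ℕ) := Fin d → AddCircle (L : ℝ)

/-- Geodesic (Euclidean) distance on the torus. -/
noncomputable def torusDist {d L : ℕ} (x y : Torus d L) : ℝ :=
  Real.sqrt (∑ i, (dist (x i) (y i)) ^ 2)

/-- The entropy function `i`. (`Real.log 0 = 0` gives the convention `0 · log 0 = 0`.) -/
noncomputable def ient (m : ℝ) : ℝ :=
  (1 - m) / 2 * Real.log ((1 - m) / 2) + (1 + m) / 2 * Real.log ((1 + m) / 2)

/-- The hypotheses on the Kac interaction potential `J : [0,∞) → ℝ`: nonnegative, bounded,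
continuous, supported in `[0,1]`, smooth and strictly decreasing on `[0,1]`, and normalized
so that `∫_{ℝ^d} J(|r|) dr = 1`. -/
structure KacPotential (d : ℕ) (J : ℝ → ℝ) : Prop where
  nonneg : ∀ r, 0 ≤ J r
  bounded : ∃ M, ∀ r, |J r| ≤ M
  continuous : Continuous J
  support : ∀ r, 1 < r → J r = 0
  strictAnti : StrictAntiOn J (Set.Icc 0 1)
  smooth : ContDiffOn ℝ (⊤ : ℕ∞) J (Set.Icc 0 1)
  normalized : (∫ r : EuclideanSpace ℝ (Fin d), J ‖r‖) = 1

/-- The Gates–Penrose–Lebowitz free energy functional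
`F(σ) = (1/β)∫ i(σ(x)) dx − (1/2)∫∫ J(|x−y|) σ(x) σ(y) dx dy`. -/
noncomputable def GPL (d L : ℕ) [Fact ((0:ℝ) < L)] (β : ℝ) (J : ℝ → ℝ)
    (σ : Torus d L → ℝ) : ℝ :=
  (1 / β) * (∫ x, ient (σ x))
    - (1 / 2) * ∫ x, ∫ y, J (torusDist x y) * σ x * σ y

open scoped Classical

/-- The representative coordinate in `[0, L)` of a point of the circle `ℝ/Lℤ`. -/
noncomputable def torusCoord {L : ℕ} [Fact ((0:ℝ) < L)] (x : AddCircle (L:ℝ)) : ℝ :=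
  ((AddCircle.equivIco (L:ℝ) 0) x).1

/-- Index of the dyadic cube of side `2^{-n}` (from the partition `Q^{(n)}`) containing `x`. -/
noncomputable def cubeIdx {d : ℕ} (L : ℕ) [Fact ((0:ℝ) < L)] (n : ℕ) (x : Torus d L) :
    Fin d → ℤ := fun i => ⌊torusCoord (x i) * 2 ^ n⌋

/-- The cube of the partition `Q^{(n)}` containing `x`. -/
noncomputable def cubeOf {d : ℕ} (L : ℕ) [Fact ((0:ℝ) < L)] (n : ℕ) (x : Torus d L) :
    Set (Torus d L) := {y | cubeIdx L n y = cubeIdx L n x}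

/-- Coarse graining `π^{(δ)}`: averaging over the cubes of side `2^{-n}` of `Q^{(n)}`. -/
noncomputable def coarse {d : ℕ} (L : ℕ) [Fact ((0:ℝ) < L)] (n : ℕ)
    (f : Torus d L → ℝ) : Torus d L → ℝ :=
  fun x => (∫ y in cubeOf L n x, f y) / (volume (cubeOf L n x)).toReal

/-- The microscopic lattice sites, indexing `γℤ^d ∩ T_L` with `γ = 2^{-k}`. -/
abbrev Site (d L k : ℕ) := Fin d → Fin (2 ^ k * L)

/-- Microscopic spin configurations (`true` = occupied, i.e. spin `+1`). -/
abbrev ConfigSpace (d L k : ℕ) := Site d L k → Bool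

/-- The spin value (`±1`) of a site. -/
def spin (b : Bool) : ℝ := if b then 1 else -1

/-- The position in the torus of a lattice site. -/
noncomputable def sitePos {d : ℕ} (L k : ℕ) (p : Site d L k) : Torus d L :=
  fun i => (((p i : ℝ) * (2:ℝ) ^ (-(k:ℤ)) : ℝ) : AddCircle (L:ℝ))

/-- The lattice site whose fine cube (of side `2^{-k}`) contains the point `x` of the torus. -/
noncomputable def siteOf {d : ℕ} (L k : ℕ) [Fact ((0:ℝ) < L)] (x : Torus d L) : Site d L k :=
  fun i => ⟨(⌊torusCoord (x i) * 2 ^ k⌋).toNat % (2 ^ k * L),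
    Nat.mod_lt _ (Nat.mul_pos (pow_pos (by norm_num) k)
      (by have h := (Fact.out : (0:ℝ) < L); exact_mod_cast h))⟩

/-- A microscopic configuration viewed as a `±1`-valued step function on the torus,
constant on each cube of the fine partition `Q^{(k)}`. -/
noncomputable def stepFun {d : ℕ} (L k : ℕ) [Fact ((0:ℝ) < L)]
    (s : ConfigSpace d L k) : Torus d L → ℝ :=
  fun x => spin (s (siteOf L k x))

/-- `γ = 2^{-k}`, the Kac scaling parameter. -/
noncomputable def gam (k : ℕ) : ℝ := (2:ℝ) ^ (-(k:ℤ))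

/-- The Kac Hamiltonian `H_{γ,L}(s) = -(γ^d/2) ∑_{x,y ∈ Λ_{L,γ}} J(|x-y|) s(x) s(y)`. -/
noncomputable def Ham {d : ℕ} (L k : ℕ) (J : ℝ → ℝ) (s : ConfigSpace d L k) : ℝ :=
  -((gam k) ^ d / 2) * ∑ p : Site d L k, ∑ q : Site d L k,
      J (torusDist (sitePos L k p) (sitePos L k q)) * spin (s p) * spin (s q)

/-- The number of occupied sites (sites with spin `+1`) of a configuration. -/
def numOnes {d : ℕ} (L k : ℕ) (s : ConfigSpace d L k) : ℕ :=
  (Finset.univ.filter fun p => s p = true).card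

/-- The canonical Gibbs probability, at inverse temperature `β` and particle number `Np`,
of an event `A` (as an event in `Ω_{L,γ,Np}`). -/
noncomputable def Pcan {d : ℕ} (L k : ℕ) (β : ℝ) (J : ℝ → ℝ) (Np : ℕ)
    (A : Set (ConfigSpace d L k)) : ℝ :=
  (∑ s ∈ Finset.univ.filter
      (fun s : ConfigSpace d L k => s ∈ A ∧ numOnes L k s = Np),
      Real.exp (-β * Ham L k J s)) /
  (∑ s ∈ Finset.univ.filter (fun s : ConfigSpace d L k => numOnes L k s = Np),
      Real.exp (-β * Ham L k J s))

/-- The lift of a function on the torus to a (periodic) function on `ℝ^d`. -/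
noncomputable def liftTorus {d L : ℕ} (φ : Torus d L → ℝ) : EuclideanSpace ℝ (Fin d) → ℝ :=
  fun v => φ (fun i => ((v i : ℝ) : AddCircle (L:ℝ)))

/-!
A coarse-grained configuration `σ` prescribes the number `m b` of `+1` spins in each cube `b` of
`Q^{(ℓ)}`, so its fiber has `∏ b, N.choose (m b)` elements, where `N = 2^{d (k - ℓ)}` counts the
sites in a cube. By Stirling's formula the logarithm of each factor is `-N i(σ)` up to `O(log N)`,
which produces the entropy term with the error `γ^{d (1 - δ)} log (1 / γ)`.

The energy is almost constant on the fiber. As `J` is Lipschitz of finite range, evaluating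
`J (|x - y|)` at the corners of the cubes containing `x` and `y` costs only `O(γ^δ)`, and a kernel
that is constant on products of cubes does not distinguish a configuration from its cube averages.
-/

section Entropy

lemma log_factorial_mem_Icc (n : ℕ) :
    Real.log n.factorial ∈
      Set.Icc (n * Real.log n - n) (n * Real.log n - n + (1 + Real.log n / 2)) := by
  obtain rfl | hn := eq_or_ne n 0
  · simp
  constructor
  · have stirling := Stirling.le_log_factorial_stirling hn
    have : 0 ≤ Real.log n := Real.log_natCast_nonneg n
    have : 0 ≤ Real.log (2 * π) := Real.log_nonneg (by linarith [Real.pi_gt_three])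
    linarith
  · -- The sequence `n ! / (√(2 n) (n / e) ^ n)` decreases from its first term `e / √2`.
    have anti := Stirling.log_stirlingSeq'_antitone (Nat.zero_le (n - 1))
    simp only [Function.comp_apply, Nat.succ_eq_add_one, Nat.sub_add_cancel (Nat.pos_of_ne_zero hn),
      zero_add, Stirling.log_stirlingSeq_formula] at anti
    have hn' : (n : ℝ) ≠ 0 := Nat.cast_ne_zero.2 hn
    rw [Real.log_mul two_ne_zero hn', Real.log_div hn' (Real.exp_ne_zero 1)] at anti
    simp only [Nat.factorial_one, Nat.cast_one, mul_one, one_div, Real.log_inv, Real.log_one,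
      Real.log_exp] at anti
    linarith

lemma natCast_mul_negMulLog_div (m : ℕ) {n : ℕ} (hn : n ≠ 0) :
    (n : ℝ) * negMulLog (m / n) = m * Real.log n - m * Real.log m := by
  obtain rfl | hm := eq_or_ne m 0
  · simp
  · rw [negMulLog, Real.log_div (mod_cast hm) (mod_cast hn)]
    field_simp
    ring

lemma abs_log_choose_sub_mul_binEntropy_le {n m : ℕ} (hmn : m ≤ n) :
    |Real.log (n.choose m) - n * binEntropy (m / n)| ≤ 2 + Real.log n := by
  obtain rfl | hn := eq_or_ne n 0
  · simp [Nat.le_zero.1 hmn]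
  obtain ⟨j, rfl⟩ := Nat.exists_eq_add_of_le hmn
  have one_sub : 1 - (m : ℝ) / (m + j : ℕ) = j / (m + j : ℕ) := by
    rw [one_sub_div (mod_cast hn), Nat.cast_add, add_sub_cancel_left]
  rw [binEntropy_eq_negMulLog_add_negMulLog_one_sub, one_sub, mul_add,
    natCast_mul_negMulLog_div m hn, natCast_mul_negMulLog_div j hn, Nat.cast_add_choose,
    Real.log_div (by positivity) (by positivity), Real.log_mul (by positivity) (by positivity)]
  obtain ⟨lower, upper⟩ := log_factorial_mem_Icc (m + j)
  obtain ⟨lower_m, upper_m⟩ := log_factorial_mem_Icc m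
  obtain ⟨lower_j, upper_j⟩ := log_factorial_mem_Icc j
  have log_le {i : ℕ} (hi : i ≤ m + j) : Real.log i ≤ Real.log (m + j : ℕ) := by
    obtain rfl | hi0 := Nat.eq_zero_or_pos i
    · simpa using Real.log_natCast_nonneg (m + j)
    · exact Real.log_le_log (mod_cast hi0) (mod_cast hi)
  have log_m_le := log_le (Nat.le_add_right m j)
  have log_j_le := log_le (Nat.le_add_left j m)
  have log_nonneg := Real.log_natCast_nonneg (m + j)
  push_cast at *
  rw [abs_le]
  constructor <;> linarith

lemma ient_eq_neg_binEntropy (x : ℝ) : ient x = -binEntropy ((1 + x) / 2) := by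
  rw [binEntropy_eq_negMulLog_add_negMulLog_one_sub, negMulLog, negMulLog, ient,
    show 1 - (1 + x) / 2 = (1 - x) / 2 by ring]
  ring

lemma abs_log_choose_add_mul_ient_le {n m : ℕ} (hmn : m ≤ n) :
    |Real.log (n.choose m) + n * ient ((2 * m - n) / n)| ≤ 2 + Real.log n := by
  obtain rfl | hn := eq_or_ne n 0
  · simp [Nat.le_zero.1 hmn]
  have : (1 + (2 * (m : ℝ) - n) / n) / 2 = m / n := by
    have : (n : ℝ) ≠ 0 := mod_cast hn
    field_simp
    ring
  rw [ient_eq_neg_binEntropy, this, mul_neg, ← sub_eq_add_neg]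
  exact abs_log_choose_sub_mul_binEntropy_le hmn

end Entropy

section Counting

open Finset

lemma card_boolFun_card_fiber_eq {S B : Type*} [Fintype S] [Fintype B] [DecidableEq S]
    [DecidableEq B] (φ : S → B) (t : B → ℕ) :
    #{s : S → Bool | ∀ b, #{p | φ p = b ∧ s p = true} = t b} =
      ∏ b, (#{p | φ p = b}).choose (t b) := by
  simp_rw [← card_powersetCard, ← Fintype.card_piFinset]
  -- A configuration is glued from its sets of `true` sites in the separate fibers.
  have glue {A : B → Finset S} (hA : A ∈ Fintype.piFinset fun b ↦ powersetCard (t b) {p | φ p = b})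
      (b : B) : ({p | φ p = b ∧ p ∈ A (φ p)} : Finset S) = A b := by
    have subset := (mem_powersetCard.1 (Fintype.mem_piFinset.1 hA b)).1
    ext p
    simp only [mem_filter, mem_univ, true_and]
    refine ⟨fun ⟨h, hp⟩ ↦ h ▸ hp, fun hp ↦ ?_⟩
    have h : φ p = b := by simpa using subset hp
    exact ⟨h, h.symm ▸ hp⟩
  refine card_nbij' (fun s b ↦ {p | φ p = b ∧ s p = true}) (fun A p ↦ decide (p ∈ A (φ p)))
    (fun s hs ↦ ?_) (fun A hA ↦ ?_) (fun s _ ↦ by ext; simp) (fun A hA ↦ ?_)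
  · simp only [coe_filter, mem_univ, true_and, Set.mem_ofPred_eq] at hs
    simp only [mem_coe, Fintype.mem_piFinset, mem_powersetCard]
    exact fun b ↦ ⟨monotone_filter_right _ fun p _ hp ↦ hp.1, hs b⟩
  · simp only [coe_filter, mem_univ, true_and, Set.mem_ofPred_eq, decide_eq_true_eq, glue hA]
    exact fun b ↦ (mem_powersetCard.1 (Fintype.mem_piFinset.1 hA b)).2
  · simp only [decide_eq_true_eq]
    exact funext (glue hA)

lemma abs_log_sum_exp_sub_le {S : Type*} {E : Finset S} (hE : E.Nonempty) {f : S → ℝ} {c D : ℝ}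
    (hf : ∀ s ∈ E, |f s - c| ≤ D) :
    |Real.log (∑ s ∈ E, Real.exp (f s)) - (Real.log #E + c)| ≤ D := by
  have card_pos : (0 : ℝ) < #E := mod_cast hE.card_pos
  have log_card_mul_exp (a : ℝ) : Real.log (#E • Real.exp a) = Real.log #E + a := by
    rw [nsmul_eq_mul, Real.log_mul card_pos.ne' (Real.exp_ne_zero a), Real.log_exp]
  have upper : ∑ s ∈ E, Real.exp (f s) ≤ #E • Real.exp (c + D) :=
    sum_le_card_nsmul _ _ _ fun s hs ↦ Real.exp_le_exp.2 (by linarith [(abs_le.1 (hf s hs)).2])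
  have lower : #E • Real.exp (c - D) ≤ ∑ s ∈ E, Real.exp (f s) :=
    card_nsmul_le_sum _ _ _ fun s hs ↦ Real.exp_le_exp.2 (by linarith [(abs_le.1 (hf s hs)).1])
  have log_upper := Real.log_le_log (sum_pos (fun _ _ ↦ Real.exp_pos _) hE) upper
  have log_lower := Real.log_le_log (by positivity) lower
  rw [log_card_mul_exp] at log_upper log_lower
  rw [abs_le]
  constructor <;> linarith

end Counting

section Kernel

variable {X : Type*} [MeasurableSpace X]

/-- The quadratic form `∫∫ K(x, y) f(x) f(y) dx dy` of a kernel `K`: twice the negative of the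
interaction energy of the profile `f`. -/
noncomputable def kernelForm (μ : Measure X) (K : X → X → ℝ) (f : X → ℝ) : ℝ :=
  ∫ x, ∫ y, K x y * f x * f y ∂μ ∂μ

lemma integrable_kernel_mul_mul {μ : Measure X} [SFinite μ] {K : X → X → ℝ} {f : X → ℝ}
    (hK : Integrable (Function.uncurry K) (μ.prod μ)) (hf : AEStronglyMeasurable f μ)
    {C : ℝ} (hf_le : ∀ x, |f x| ≤ C) :
    Integrable (fun z : X × X ↦ K z.1 z.2 * f z.1 * f z.2) (μ.prod μ) :=
  (hK.mul_bdd hf.comp_fst (.of_forall fun _ ↦ hf_le _)).mul_bdd hf.comp_snd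
    (.of_forall fun _ ↦ hf_le _)

lemma abs_kernelForm_sub_le {μ : Measure X} [IsFiniteMeasure μ] {K K' : X → X → ℝ} {f : X → ℝ}
    (hK : Integrable (Function.uncurry K) (μ.prod μ))
    (hK' : Integrable (Function.uncurry K') (μ.prod μ)) (hf : AEStronglyMeasurable f μ)
    (hf_le : ∀ x, |f x| ≤ 1) {C : ℝ} (hC : ∀ x, ∫ y, |K x y - K' x y| ∂μ ≤ C) :
    |kernelForm μ K f - kernelForm μ K' f| ≤ μ.real Set.univ * C := by
  have int := integrable_kernel_mul_mul hK hf hf_le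
  have int' := integrable_kernel_mul_mul hK' hf hf_le
  have int_abs : Integrable (fun z : X × X ↦ |K z.1 z.2 - K' z.1 z.2|) (μ.prod μ) :=
    (hK.sub hK').abs
  calc |kernelForm μ K f - kernelForm μ K' f|
      = |∫ z, K z.1 z.2 * f z.1 * f z.2 - K' z.1 z.2 * f z.1 * f z.2 ∂μ.prod μ| := by
        rw [integral_sub int int', integral_prod _ int, integral_prod _ int', kernelForm,
          kernelForm]
    _ ≤ ∫ z, |K z.1 z.2 - K' z.1 z.2| ∂μ.prod μ := by
        rw [← Real.norm_eq_abs]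
        refine norm_integral_le_of_norm_le int_abs (.of_forall fun z ↦ ?_)
        rw [← sub_mul, ← sub_mul, Real.norm_eq_abs, abs_mul, abs_mul, mul_assoc]
        exact mul_le_of_le_one_right (abs_nonneg _)
          (mul_le_one₀ (hf_le _) (abs_nonneg _) (hf_le _))
    _ = ∫ x, ∫ y, |K x y - K' x y| ∂μ ∂μ := integral_prod _ int_abs
    _ ≤ ∫ _, C ∂μ := integral_mono int_abs.integral_prod_left (integrable_const C) hC
    _ = μ.real Set.univ * C := by rw [integral_const, smul_eq_mul]

end Kernel

section FiberAverage

variable {X ι : Type*} [MeasurableSpace X] {μ : Measure X} {φ : X → ι} {f : X → ℝ}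

/-- The average of `f` over the fiber of `φ` through `x`: a version of the conditional expectation
of `f` given `φ` when `φ` takes finitely many values. It is `0` on fibers of measure zero. -/
noncomputable def fiberAverage (μ : Measure X) (φ : X → ι) (f : X → ℝ) (x : X) : ℝ :=
  ⨍ y in φ ⁻¹' {φ x}, f y ∂μ

lemma abs_fiberAverage_le [IsFiniteMeasure μ] {C : ℝ} (hf : ∀ x, |f x| ≤ C) (x : X) :
    |fiberAverage μ φ f x| ≤ C := by
  rw [fiberAverage, setAverage_eq, smul_eq_mul, abs_mul, abs_inv, abs_of_nonneg measureReal_nonneg]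
  refine inv_mul_le_of_le_mul₀ measureReal_nonneg ((abs_nonneg _).trans (hf x)) ?_
  rw [mul_comm, ← Real.norm_eq_abs]
  exact norm_setIntegral_le_of_norm_le_const (measure_lt_top μ _) fun x _ ↦ hf x

variable [MeasurableSpace ι] [MeasurableSingletonClass ι]

lemma measurable_fiberAverage [Finite ι] (hφ : Measurable φ) : Measurable (fiberAverage μ φ f) :=
  (measurable_of_finite fun i ↦ ⨍ y in φ ⁻¹' {i}, f y ∂μ).comp hφ

lemma setIntegral_preimage_comp_mul (hφ : Measurable φ) (g : ι → ℝ) (i : ι) :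
    ∫ x in φ ⁻¹' {i}, g (φ x) * f x ∂μ = g i * ∫ x in φ ⁻¹' {i}, f x ∂μ := by
  rw [← integral_const_mul]
  refine setIntegral_congr_fun (hφ (measurableSet_singleton i)) fun x hx ↦ ?_
  rw [Set.mem_preimage, Set.mem_singleton_iff] at hx
  simp only [hx]

lemma integral_eq_sum_setIntegral_preimage [Fintype ι] (hφ : Measurable φ) (hf : Integrable f μ) :
    ∫ x, f x ∂μ = ∑ i, ∫ x in φ ⁻¹' {i}, f x ∂μ := by
  rw [← integral_iUnion_fintype (fun i ↦ hφ (measurableSet_singleton i))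
    (fun i j hij ↦ (Set.disjoint_singleton.2 hij).preimage φ) fun i ↦ hf.integrableOn,
    ← Set.preimage_iUnion, Set.iUnion_of_singleton, Set.preimage_univ, setIntegral_univ]

variable [IsFiniteMeasure μ]

lemma setIntegral_preimage_fiberAverage (hφ : Measurable φ) (i : ι) :
    ∫ x in φ ⁻¹' {i}, fiberAverage μ φ f x ∂μ = ∫ x in φ ⁻¹' {i}, f x ∂μ := by
  have const : Set.EqOn (fiberAverage μ φ f) (fun _ ↦ ⨍ y in φ ⁻¹' {i}, f y ∂μ) (φ ⁻¹' {i}) := by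
    intro x hx
    rw [fiberAverage, Set.mem_singleton_iff.1 hx]
  rw [setIntegral_congr_fun (hφ (measurableSet_singleton i)) const, setIntegral_const]
  exact measure_smul_setAverage f (measure_ne_top μ _)

variable [Finite ι]

lemma integrable_comp_of_finite (hφ : Measurable φ) (g : ι → ℝ) :
    Integrable (fun x ↦ g (φ x)) μ :=
  (Integrable.of_finite (μ := μ.map φ)).comp_measurable hφ

lemma integral_comp_mul_fiberAverage (hφ : Measurable φ) (hf : Integrable f μ) (g : ι → ℝ) :
    ∫ x, g (φ x) * fiberAverage μ φ f x ∂μ = ∫ x, g (φ x) * f x ∂μ := by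
  cases nonempty_fintype ι
  have int_average : Integrable (fun x ↦ g (φ x) * fiberAverage μ φ f x) μ :=
    integrable_comp_of_finite hφ fun i ↦ g i * ⨍ y in φ ⁻¹' {i}, f y ∂μ
  have int : Integrable (fun x ↦ g (φ x) * f x) μ :=
    hf.bdd_mul (integrable_comp_of_finite hφ g).aestronglyMeasurable
      (.of_forall fun x ↦ norm_le_pi_norm g (φ x))
  rw [integral_eq_sum_setIntegral_preimage hφ int_average,
    integral_eq_sum_setIntegral_preimage hφ int]
  simp only [setIntegral_preimage_comp_mul hφ, setIntegral_preimage_fiberAverage hφ]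

lemma kernelForm_fiberAverage (hφ : Measurable φ) (hf : Integrable f μ) (G : ι → ι → ℝ) :
    kernelForm μ (fun x y ↦ G (φ x) (φ y)) (fiberAverage μ φ f) =
      kernelForm μ (fun x y ↦ G (φ x) (φ y)) f := by
  have pull (u : X → ℝ) (x : X) : ∫ y, G (φ x) (φ y) * u x * u y ∂μ =
      (∫ y, G (φ x) (φ y) * u y ∂μ) * u x := by
    rw [← integral_mul_const]
    exact integral_congr_ae (.of_forall fun y ↦ by ring)
  simp only [kernelForm, pull, integral_comp_mul_fiberAverage hφ hf]
  exact integral_comp_mul_fiberAverage hφ hf fun i ↦ ∫ y, G i (φ y) * f y ∂μ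

end FiberAverage

section Potential

lemma KacPotential.apply_one {d : ℕ} {J : ℝ → ℝ} (hJ : KacPotential d J) : J 1 = 0 := by
  have eqOn : Set.EqOn J (fun _ ↦ 0) (Set.Ioi 1) := fun r hr ↦ hJ.support r hr
  exact eqOn.closure hJ.continuous continuous_const (by simp [closure_Ioi])

lemma KacPotential.exists_lipschitzOnWith {d : ℕ} {J : ℝ → ℝ} (hJ : KacPotential d J) :
    ∃ Λ, LipschitzOnWith Λ J (Set.Ici 0) := by
  obtain ⟨Λ, hΛ⟩ := (hJ.smooth.of_le (m := 1) (mod_cast le_top)).exists_lipschitzOnWith one_ne_zero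
    (convex_Icc 0 1) isCompact_Icc
  have truncate : J = J ∘ (min · 1) := by
    ext r
    obtain hr | hr := le_or_gt r 1
    · simp [hr]
    · simp [hr.le, hJ.support r hr, hJ.apply_one]
  rw [truncate]
  refine ⟨Λ * 1, hΛ.comp (LipschitzWith.id.min_const 1).lipschitzOnWith fun r hr ↦ ?_⟩
  exact ⟨le_min hr zero_le_one, min_le_right r 1⟩

end Potential

section Scale

lemma gam_eq_inv (n : ℕ) : gam n = ((2 : ℝ) ^ n)⁻¹ := by
  rw [gam, zpow_neg, zpow_natCast]

lemma gam_pos (n : ℕ) : 0 < gam n := zpow_pos two_pos _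

lemma gam_antitone : Antitone gam := fun m n hmn ↦ by
  rw [gam, gam]
  gcongr
  exact one_le_two

lemma gam_le_one (n : ℕ) : gam n ≤ 1 := (gam_antitone n.zero_le).trans_eq (by simp [gam])

end Scale

section Coordinates

variable {L : ℕ} [Fact ((0 : ℝ) < L)]

lemma torusCoord_mem_Ico (x : AddCircle (L : ℝ)) : torusCoord x ∈ Set.Ico (0 : ℝ) L := by
  simpa only [zero_add, torusCoord] using (AddCircle.equivIco (L : ℝ) 0 x).2

lemma coe_torusCoord (x : AddCircle (L : ℝ)) : (torusCoord x : AddCircle (L : ℝ)) = x :=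
  AddCircle.coe_equivIco

lemma torusCoord_coe {r : ℝ} (hr : r ∈ Set.Ico (0 : ℝ) L) :
    torusCoord (r : AddCircle (L : ℝ)) = r :=
  AddCircle.equivIco_coe_of_mem (by rwa [zero_add])

lemma measurable_torusCoord : Measurable (torusCoord : AddCircle (L : ℝ) → ℝ) :=
  measurable_subtype_coe.comp (AddCircle.measurableEquivIco (L : ℝ) 0).measurable

lemma measurePreserving_torusCoord :
    MeasurePreserving (torusCoord : AddCircle (L : ℝ) → ℝ) volume
      (volume.restrict (Set.Ico 0 L)) := by
  have mk := AddCircle.measurePreserving_mk (L : ℝ) 0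
  rw [zero_add, ← restrict_Ico_eq_restrict_Ioc] at mk
  refine ⟨measurable_torusCoord, ?_⟩
  rw [← mk.map_eq, Measure.map_map measurable_torusCoord mk.measurable]
  have eq_id : (torusCoord : AddCircle (L : ℝ) → ℝ) ∘ (↑) =ᵐ[volume.restrict (Set.Ico 0 (L : ℝ))]
      id := by
    filter_upwards [ae_restrict_mem measurableSet_Ico] with r hr using torusCoord_coe hr
  rw [Measure.map_congr eq_id, Measure.map_id]

lemma volume_preimage_torusCoord_Ico {a b : ℝ} (ha : 0 ≤ a) (hb : b ≤ L) :
    volume ((torusCoord : AddCircle (L : ℝ) → ℝ) ⁻¹' Set.Ico a b) = ENNReal.ofReal (b - a) := by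
  rw [measurePreserving_torusCoord.measure_preimage measurableSet_Ico.nullMeasurableSet,
    Measure.restrict_apply measurableSet_Ico,
    Set.inter_eq_left.2 (Set.Ico_subset_Ico ha hb), Real.volume_Ico]

end Coordinates

section Cubes

variable {d L n : ℕ}

lemma succ_mul_gam_le (p : Site d L n) (i : Fin d) : ((p i : ℝ) + 1) * gam n ≤ L := by
  rw [gam_eq_inv, mul_inv_le_iff₀ (by positivity)]
  exact_mod_cast (p i).2.trans_eq (mul_comm _ _)

variable [Fact ((0 : ℝ) < L)]

lemma floor_torusCoord_mul_two_pow (x : Torus d L) (i : Fin d) :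
    ⌊torusCoord (x i) * 2 ^ n⌋ = (siteOf L n x i : ℕ) := by
  obtain ⟨nonneg, lt⟩ := torusCoord_mem_Ico (x i)
  obtain ⟨j, hj⟩ := Int.eq_ofNat_of_zero_le
    (Int.floor_nonneg.2 (by positivity : 0 ≤ torusCoord (x i) * 2 ^ n))
  have j_lt : j < 2 ^ n * L := by
    rw [← Nat.cast_lt (α := ℤ), ← hj, Int.floor_lt]
    push_cast
    rw [mul_comm]
    gcongr
  simp [siteOf, hj, Nat.mod_eq_of_lt j_lt]

lemma siteOf_eq_iff {x : Torus d L} {p : Site d L n} :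
    siteOf L n x = p ↔ ∀ i, ⌊torusCoord (x i) * 2 ^ n⌋ = (p i : ℕ) := by
  simp only [floor_torusCoord_mul_two_pow, funext_iff, Fin.ext_iff, Nat.cast_inj]

lemma siteOf_eq_iff_mem_Ico {x : Torus d L} {p : Site d L n} :
    siteOf L n x = p ↔ ∀ i, torusCoord (x i) ∈ Set.Ico (p i * gam n) ((p i + 1) * gam n) := by
  simp only [siteOf_eq_iff, Int.floor_eq_iff, Int.cast_natCast, Set.mem_Ico, gam_eq_inv,
    mul_inv_le_iff₀ (pow_pos (zero_lt_two (α := ℝ)) n),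
    lt_mul_inv_iff₀ (pow_pos (zero_lt_two (α := ℝ)) n)]

lemma preimage_siteOf_singleton (p : Site d L n) :
    siteOf L n ⁻¹' {p} = Set.univ.pi fun i ↦
      torusCoord ⁻¹' Set.Ico (p i * gam n) ((p i + 1) * gam n) := by
  ext x
  simp [siteOf_eq_iff_mem_Ico]

lemma measurable_siteOf : Measurable (siteOf L n : Torus d L → Site d L n) := by
  refine measurable_to_countable' fun p ↦ ?_
  rw [preimage_siteOf_singleton]
  exact MeasurableSet.univ_pi fun i ↦ measurable_torusCoord measurableSet_Ico

lemma volume_real_preimage_siteOf (p : Site d L n) :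
    volume.real (siteOf L n ⁻¹' {p} : Set (Torus d L)) = gam n ^ d := by
  have side (i : Fin d) : volume ((torusCoord : AddCircle (L : ℝ) → ℝ) ⁻¹'
      Set.Ico (p i * gam n) ((p i + 1) * gam n)) = ENNReal.ofReal (gam n) := by
    rw [volume_preimage_torusCoord_Ico (by have := gam_pos n; positivity) (succ_mul_gam_le p i),
      add_mul, one_mul, add_sub_cancel_left]
  rw [measureReal_def, preimage_siteOf_singleton, volume_pi_pi,
    Finset.prod_congr rfl fun i _ ↦ side i, Finset.prod_const, Finset.card_fin,
    ENNReal.toReal_pow, ENNReal.toReal_ofReal (gam_pos n).le]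

lemma integral_comp_siteOf (g : Site d L n → ℝ) :
    ∫ x : Torus d L, g (siteOf L n x) = gam n ^ d * ∑ p, g p := by
  rw [← integral_map measurable_siteOf.aemeasurable
    (measurable_of_finite g).aestronglyMeasurable, integral_fintype .of_finite, Finset.mul_sum]
  simp only [map_measureReal_apply measurable_siteOf (measurableSet_singleton _),
    volume_real_preimage_siteOf, smul_eq_mul]

lemma siteOf_sitePos (p : Site d L n) : siteOf L n (sitePos L n p) = p := by
  rw [siteOf_eq_iff_mem_Ico]
  intro i
  have gam_pos := gam_pos n
  have succ_le := succ_mul_gam_le p i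
  have coord : torusCoord (sitePos L n p i) = p i * gam n :=
    torusCoord_coe ⟨by positivity, by unfold gam at *; linarith⟩
  rw [coord]
  exact ⟨le_rfl, by linarith⟩

end Cubes

section TorusDist

variable {d L : ℕ}

lemma torusDist_eq_dist_toLp (x y : Torus d L) :
    torusDist x y = dist (WithLp.toLp 2 x) (WithLp.toLp 2 y) := by
  rw [PiLp.dist_eq_of_L2, torusDist]

lemma torusDist_nonneg (x y : Torus d L) : 0 ≤ torusDist x y := Real.sqrt_nonneg _

lemma continuous_torusDist :
    Continuous fun z : Torus d L × Torus d L ↦ torusDist z.1 z.2 := by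
  unfold torusDist
  fun_prop

lemma abs_torusDist_sub_le (x y x' y' : Torus d L) :
    |torusDist x y - torusDist x' y'| ≤ torusDist x x' + torusDist y y' := by
  simp only [torusDist_eq_dist_toLp]
  exact dist_dist_dist_le _ _ _ _

lemma dist_le_torusDist (x y : Torus d L) : dist x y ≤ torusDist x y :=
  (dist_pi_le_iff (torusDist_nonneg x y)).2 fun i ↦ Real.le_sqrt_of_sq_le <|
    Finset.single_le_sum (f := fun i ↦ dist (x i) (y i) ^ 2) (fun _ _ ↦ sq_nonneg _)
      (Finset.mem_univ i)

lemma torusDist_le_sqrt_mul {x y : Torus d L} {r : ℝ} (hr : 0 ≤ r)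
    (h : ∀ i, dist (x i) (y i) ≤ r) : torusDist x y ≤ √d * r := by
  refine Real.sqrt_le_iff.2 ⟨by positivity, ?_⟩
  calc ∑ i, dist (x i) (y i) ^ 2 ≤ ∑ _ : Fin d, r ^ 2 := by gcongr with i; exact h i
    _ = (√d * r) ^ 2 := by simp [mul_pow]

variable [Fact ((0 : ℝ) < L)]

lemma volume_real_closedBall_le (x : Torus d L) {r : ℝ} (hr : 0 ≤ r) :
    volume.real (Metric.closedBall x r) ≤ (2 * r) ^ d := by
  rw [measureReal_def, MeasureTheory.volume_pi_closedBall _ hr, ENNReal.toReal_prod]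
  refine (Finset.prod_le_prod (fun _ _ ↦ ENNReal.toReal_nonneg) fun i _ ↦ ?_).trans_eq
    (Fin.prod_const d (2 * r))
  rw [AddCircle.volume_closedBall]
  exact ENNReal.toReal_le_of_le_ofReal (by positivity)
    (ENNReal.ofReal_le_ofReal (min_le_right _ _))

lemma volume_real_univ_torus : volume.real (Set.univ : Set (Torus d L)) = (L : ℝ) ^ d := by
  simp [measureReal_def, volume_pi, Measure.pi_univ]

/-- The lower-left corner of the cube of `Q^{(n)}` containing `x`. -/
noncomputable def corner (n : ℕ) (x : Torus d L) : Torus d L := sitePos L n (siteOf L n x)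

lemma dist_corner_apply_le (n : ℕ) (x : Torus d L) (i : Fin d) :
    dist (x i) (corner n x i) ≤ gam n := by
  obtain ⟨lower, upper⟩ := siteOf_eq_iff_mem_Ico.1 (rfl : siteOf L n x = siteOf L n x) i
  rw [gam] at *
  rw [corner, sitePos, ← coe_torusCoord (x i), dist_eq_norm, ← AddCircle.coe_sub]
  refine (QuotientAddGroup.norm_mk_le_norm).trans ?_
  rw [Real.norm_eq_abs, abs_of_nonneg (sub_nonneg.2 lower)]
  linarith

lemma torusDist_corner_le (n : ℕ) (x : Torus d L) : torusDist x (corner n x) ≤ √d * gam n :=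
  torusDist_le_sqrt_mul (gam_pos n).le (dist_corner_apply_le n x)

end TorusDist

section Energy

variable {d L n : ℕ} [Fact ((0 : ℝ) < L)] {J : ℝ → ℝ} {Λ R : NNReal}

/-- Factor of the mesh size in the `L¹`-error made by evaluating `J (|x - y|)` at the corners of the
cubes, for `J` of range `R` and Lipschitz constant `Λ`. -/
noncomputable def discretizationConst (d : ℕ) (Λ R : NNReal) : ℝ :=
  2 * Λ * √d * (2 * (R + 2 * √d)) ^ d

lemma discretizationConst_nonneg (d : ℕ) (Λ R : NNReal) : 0 ≤ discretizationConst d Λ R := by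
  unfold discretizationConst
  positivity

lemma abs_sub_corner_le_indicator (hJ : LipschitzOnWith Λ J (Set.Ici 0))
    (hsupp : ∀ r : ℝ, R < r → J r = 0) (n : ℕ) (x y : Torus d L) :
    |J (torusDist x y) - J (torusDist (corner n x) (corner n y))| ≤
      (Metric.closedBall x (R + 2 * √d)).indicator (fun _ ↦ 2 * Λ * √d * gam n) y := by
  have dist_diff : |torusDist x y - torusDist (corner n x) (corner n y)| ≤ 2 * (√d * gam n) := by
    linarith [abs_torusDist_sub_le x y (corner n x) (corner n y), torusDist_corner_le n x,
      torusDist_corner_le n y]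
  by_cases hy : y ∈ Metric.closedBall x (R + 2 * √d)
  · rw [Set.indicator_of_mem hy]
    calc |J (torusDist x y) - J (torusDist (corner n x) (corner n y))|
        ≤ Λ * |torusDist x y - torusDist (corner n x) (corner n y)| :=
          hJ.dist_le_mul _ (torusDist_nonneg _ _) _ (torusDist_nonneg _ _)
      _ ≤ Λ * (2 * (√d * gam n)) := by gcongr
      _ = 2 * Λ * √d * gam n := by ring
  · have far : R + 2 * √d < torusDist x y := by
      rw [Metric.mem_closedBall, not_le, dist_comm] at hy
      exact hy.trans_le (dist_le_torusDist x y)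
    have mesh_le : √d * gam n ≤ √d := mul_le_of_le_one_right (Real.sqrt_nonneg _) (gam_le_one n)
    rw [Set.indicator_of_notMem hy, hsupp _ (by linarith [Real.sqrt_nonneg (d : ℝ)]),
      hsupp _ (by linarith [(abs_le.1 dist_diff).2]), sub_zero, abs_zero]

lemma integral_abs_sub_corner_le (hJ : LipschitzOnWith Λ J (Set.Ici 0))
    (hsupp : ∀ r : ℝ, R < r → J r = 0) (n : ℕ) (x : Torus d L) :
    ∫ y, |J (torusDist x y) - J (torusDist (corner n x) (corner n y))| ≤
      discretizationConst d Λ R * gam n := by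
  have gam_pos := gam_pos n
  calc ∫ y, |J (torusDist x y) - J (torusDist (corner n x) (corner n y))|
      ≤ ∫ y, (Metric.closedBall x (R + 2 * √d)).indicator (fun _ ↦ 2 * Λ * √d * gam n) y :=
        integral_mono_of_nonneg (.of_forall fun _ ↦ abs_nonneg _)
          ((integrable_const _).indicator measurableSet_closedBall)
          (.of_forall (abs_sub_corner_le_indicator hJ hsupp n x))
    _ = volume.real (Metric.closedBall x (R + 2 * √d)) * (2 * Λ * √d * gam n) := by
        rw [integral_indicator_const _ measurableSet_closedBall, smul_eq_mul]
    _ ≤ (2 * (R + 2 * √d)) ^ d * (2 * Λ * √d * gam n) := by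
        gcongr
        exact volume_real_closedBall_le x (by positivity)
    _ = discretizationConst d Λ R * gam n := by
        rw [discretizationConst]
        ring

lemma abs_kernelForm_sub_corner_le (hJ : LipschitzOnWith Λ J (Set.Ici 0))
    (hsupp : ∀ r : ℝ, R < r → J r = 0) (n : ℕ) {f : Torus d L → ℝ}
    (hf : AEStronglyMeasurable f volume) (hf_le : ∀ x, |f x| ≤ 1) :
    |kernelForm volume (fun x y ↦ J (torusDist x y)) f -
        kernelForm volume (fun x y ↦ J (torusDist (corner n x) (corner n y))) f| ≤
      (L : ℝ) ^ d * (discretizationConst d Λ R * gam n) := by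
  have continuous_kernel : Continuous fun z : Torus d L × Torus d L ↦ J (torusDist z.1 z.2) :=
    hJ.continuousOn.comp_continuous continuous_torusDist fun z ↦ torusDist_nonneg z.1 z.2
  have int_corner : Integrable
      (fun z : Torus d L × Torus d L ↦ J (torusDist (corner n z.1) (corner n z.2)))
      (volume.prod volume) :=
    integrable_comp_of_finite (measurable_siteOf.prodMap measurable_siteOf)
      fun p ↦ J (torusDist (sitePos L n p.1) (sitePos L n p.2))
  rw [← volume_real_univ_torus]
  exact abs_kernelForm_sub_le
    (continuous_kernel.integrable_of_hasCompactSupport (HasCompactSupport.of_compactSpace _))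
    int_corner hf hf_le (integral_abs_sub_corner_le hJ hsupp n)

lemma ham_eq_kernelForm (k : ℕ) (J : ℝ → ℝ) (s : ConfigSpace d L k) :
    Ham L k J s = -(((2 : ℝ) ^ k) ^ d / 2) *
      kernelForm volume (fun x y ↦ J (torusDist (corner k x) (corner k y))) (stepFun L k s) := by
  simp only [kernelForm, corner, stepFun]
  simp_rw [fun x : Torus d L ↦ integral_comp_siteOf fun q ↦
    J (torusDist (sitePos L k (siteOf L k x)) (sitePos L k q)) * spin (s (siteOf L k x)) *
      spin (s q)]
  rw [integral_comp_siteOf fun p ↦ gam k ^ d *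
    ∑ q, J (torusDist (sitePos L k p) (sitePos L k q)) * spin (s p) * spin (s q), Ham, gam_eq_inv,
    inv_pow, ← Finset.mul_sum]
  field_simp

lemma cubeOf_eq_preimage (n : ℕ) (x : Torus d L) :
    cubeOf L n x = siteOf L n ⁻¹' {siteOf L n x} := by
  ext y
  simp only [cubeOf, Set.mem_ofPred_eq, funext_iff, cubeIdx, Set.mem_preimage,
    Set.mem_singleton_iff, floor_torusCoord_mul_two_pow, Nat.cast_inj, Fin.ext_iff]

lemma coarse_eq_fiberAverage (n : ℕ) (f : Torus d L → ℝ) :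
    coarse L n f = fiberAverage volume (siteOf L n) f := by
  ext x
  rw [coarse, cubeOf_eq_preimage, fiberAverage, setAverage_eq, smul_eq_mul, div_eq_inv_mul,
    measureReal_def]

lemma abs_spin (b : Bool) : |spin b| = 1 := by
  cases b <;> simp [spin]

lemma measurable_stepFun {k : ℕ} (s : ConfigSpace d L k) : Measurable (stepFun L k s) :=
  (measurable_of_finite fun p ↦ spin (s p)).comp measurable_siteOf

lemma kernelForm_corner_coarse (n : ℕ) (J : ℝ → ℝ) {f : Torus d L → ℝ}
    (hf : Integrable f volume) :
    kernelForm volume (fun x y ↦ J (torusDist (corner n x) (corner n y))) (coarse L n f) =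
      kernelForm volume (fun x y ↦ J (torusDist (corner n x) (corner n y))) f := by
  rw [coarse_eq_fiberAverage]
  exact kernelForm_fiberAverage measurable_siteOf hf
    fun p q ↦ J (torusDist (sitePos L n p) (sitePos L n q))

lemma abs_ham_add_kernelForm_coarse_le {k ℓ : ℕ} (hJ : LipschitzOnWith Λ J (Set.Ici 0))
    (hsupp : ∀ r : ℝ, R < r → J r = 0) (h : ℓ ≤ k) (s : ConfigSpace d L k) :
    |Ham L k J s + ((2 : ℝ) ^ k) ^ d / 2 *
        kernelForm volume (fun x y ↦ J (torusDist x y)) (coarse L ℓ (stepFun L k s))| ≤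
      ((2 : ℝ) ^ k) ^ d / 2 * (3 * ((L : ℝ) ^ d * (discretizationConst d Λ R * gam ℓ))) := by
  have step_le (x) : |stepFun L k s x| ≤ 1 := (abs_spin _).le
  have step_meas := (measurable_stepFun s).aestronglyMeasurable (μ := volume)
  have step_int : Integrable (stepFun L k s) volume := .of_bound step_meas 1 (.of_forall step_le)
  have coarse_le (x) : |coarse L ℓ (stepFun L k s) x| ≤ 1 := by
    rw [coarse_eq_fiberAverage]
    exact abs_fiberAverage_le step_le x
  have coarse_meas : AEStronglyMeasurable (coarse L ℓ (stepFun L k s)) volume := by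
    rw [coarse_eq_fiberAverage]
    exact (measurable_fiberAverage measurable_siteOf).aestronglyMeasurable
  have mesh_mono : (L : ℝ) ^ d * (discretizationConst d Λ R * gam k) ≤
      (L : ℝ) ^ d * (discretizationConst d Λ R * gam ℓ) := by
    gcongr
    · exact discretizationConst_nonneg d Λ R
    · exact gam_antitone h
  have fine := abs_le.1 (abs_kernelForm_sub_corner_le hJ hsupp k step_meas step_le)
  have block := abs_le.1 (abs_kernelForm_sub_corner_le hJ hsupp ℓ step_meas step_le)
  have block_coarse := abs_le.1 (abs_kernelForm_sub_corner_le hJ hsupp ℓ coarse_meas coarse_le)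
  rw [kernelForm_corner_coarse ℓ J step_int] at block_coarse
  rw [ham_eq_kernelForm, neg_mul, neg_add_eq_sub, ← mul_sub, abs_mul, abs_of_pos (by positivity)]
  gcongr
  rw [abs_le]
  constructor <;> linarith

end Energy

section Blocks

open Finset

variable {d L k ℓ : ℕ} [Fact ((0 : ℝ) < L)]

/-- The cube of the coarse partition `Q^{(ℓ)}` containing a fine site, named by its index. -/
noncomputable def blockOf (ℓ : ℕ) (p : Site d L k) : Site d L ℓ := siteOf L ℓ (sitePos L k p)

/-- The number of sites with spin `+1` in a cube of the coarse partition `Q^{(ℓ)}`. -/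
noncomputable def blockOnes (ℓ : ℕ) (s : ConfigSpace d L k) (b : Site d L ℓ) : ℕ :=
  #{p | blockOf ℓ p = b ∧ s p = true}

lemma blockOf_siteOf (h : ℓ ≤ k) (x : Torus d L) : blockOf ℓ (siteOf L k x) = siteOf L ℓ x := by
  obtain ⟨j, rfl⟩ := Nat.exists_eq_add_of_le h
  have floor_div (t : ℝ) : ⌊t * 2 ^ ℓ⌋ = ⌊t * 2 ^ (ℓ + j)⌋ / (2 ^ j : ℕ) := by
    rw [← Int.floor_div_natCast, pow_add]
    push_cast
    field_simp
  have same_site := siteOf_sitePos (siteOf L (ℓ + j) x)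
  rw [siteOf_eq_iff] at same_site
  rw [blockOf, siteOf_eq_iff]
  intro i
  rw [floor_div, same_site, ← floor_torusCoord_mul_two_pow, ← floor_torusCoord_mul_two_pow,
    ← floor_div]

lemma setIntegral_comp_siteOf (h : ℓ ≤ k) (g : Site d L k → ℝ) (b : Site d L ℓ) :
    ∫ x in siteOf L ℓ ⁻¹' {b}, g (siteOf L k x) = gam k ^ d * ∑ p with blockOf ℓ p = b, g p := by
  rw [sum_filter, ← integral_comp_siteOf,
    ← integral_indicator (measurable_siteOf (measurableSet_singleton b))]
  simp only [Set.indicator_apply, Set.mem_preimage, Set.mem_singleton_iff, blockOf_siteOf h]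

lemma card_block (h : ℓ ≤ k) (b : Site d L ℓ) :
    #{p : Site d L k | blockOf ℓ p = b} = (2 ^ (k - ℓ)) ^ d := by
  have volumes := setIntegral_comp_siteOf h (fun _ ↦ 1) b
  rw [setIntegral_const, volume_real_preimage_siteOf, sum_const, smul_eq_mul, mul_one,
    nsmul_eq_mul, mul_one, gam_eq_inv, gam_eq_inv, inv_pow, inv_pow] at volumes
  rw [← Nat.cast_inj (R := ℝ)]
  push_cast
  rw [pow_sub₀ _ two_ne_zero h, mul_pow, inv_pow]
  field_simp at volumes ⊢
  linarith

lemma blockOnes_le (h : ℓ ≤ k) (s : ConfigSpace d L k) (b : Site d L ℓ) :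
    blockOnes ℓ s b ≤ (2 ^ (k - ℓ)) ^ d := by
  rw [← card_block h b]
  exact card_le_card (monotone_filter_right _ fun p _ hp ↦ hp.1)

lemma sum_spin_block (h : ℓ ≤ k) (s : ConfigSpace d L k) (b : Site d L ℓ) :
    ∑ p with blockOf ℓ p = b, spin (s p) =
      2 * blockOnes ℓ s b - ((2 ^ (k - ℓ)) ^ d : ℕ) := by
  have spin_eq (b : Bool) : spin b = 2 * (if b = true then 1 else 0) - 1 := by
    cases b <;> norm_num [spin]
  simp only [spin_eq, sum_sub_distrib, ← mul_sum, sum_boole, filter_filter, sum_const,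
    card_block h, nsmul_eq_mul, mul_one, blockOnes]

lemma coarse_stepFun (h : ℓ ≤ k) (s : ConfigSpace d L k) (x : Torus d L) :
    coarse L ℓ (stepFun L k s) x =
      (2 * blockOnes ℓ s (siteOf L ℓ x) - ((2 ^ (k - ℓ)) ^ d : ℕ)) / ((2 ^ (k - ℓ)) ^ d : ℕ) := by
  have volume_cube : gam ℓ ^ d = gam k ^ d * ((2 ^ (k - ℓ)) ^ d : ℕ) := by
    rw [← card_block h (siteOf L ℓ x), ← volume_real_preimage_siteOf (siteOf L ℓ x)]
    simpa using setIntegral_comp_siteOf h (fun _ ↦ 1) (siteOf L ℓ x)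
  rw [coarse, cubeOf_eq_preimage, ← measureReal_def, volume_real_preimage_siteOf, volume_cube]
  simp only [stepFun]
  rw [setIntegral_comp_siteOf h fun p ↦ spin (s p), sum_spin_block h,
    mul_div_mul_left _ _ (pow_pos (gam_pos k) d).ne']

lemma coarse_stepFun_eq_iff (h : ℓ ≤ k) {s t : ConfigSpace d L k} :
    coarse L ℓ (stepFun L k s) = coarse L ℓ (stepFun L k t) ↔
      ∀ b, blockOnes ℓ s b = blockOnes ℓ t b := by
  have card_ne_zero : (((2 ^ (k - ℓ)) ^ d : ℕ) : ℝ) ≠ 0 := by positivity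
  simp only [funext_iff, coarse_stepFun h, div_left_inj' card_ne_zero, sub_left_inj,
    mul_right_inj' (two_ne_zero (α := ℝ)), Nat.cast_inj]
  exact ⟨fun heq b ↦ by simpa only [siteOf_sitePos] using heq (sitePos L ℓ b),
    fun heq x ↦ heq _⟩

lemma card_coarse_fiber (h : ℓ ≤ k) (t : ConfigSpace d L k) :
    #{s | coarse L ℓ (stepFun L k s) = coarse L ℓ (stepFun L k t)} =
      ∏ b, ((2 ^ (k - ℓ)) ^ d).choose (blockOnes ℓ t b) := by
  have card_fiber := card_boolFun_card_fiber_eq (S := Site d L k) (blockOf ℓ) (blockOnes ℓ t)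
  simp only [card_block h] at card_fiber
  rw [← card_fiber]
  congr! with s
  exact coarse_stepFun_eq_iff h

lemma integral_ient_coarse_stepFun (h : ℓ ≤ k) (s : ConfigSpace d L k) :
    ((2 : ℝ) ^ k) ^ d * ∫ x, ient (coarse L ℓ (stepFun L k s) x) =
      ∑ b, ((2 ^ (k - ℓ)) ^ d : ℕ) * ient
        ((2 * blockOnes ℓ s b - ((2 ^ (k - ℓ)) ^ d : ℕ)) / ((2 ^ (k - ℓ)) ^ d : ℕ)) := by
  simp only [coarse_stepFun h]
  rw [integral_comp_siteOf fun b ↦ ient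
      ((2 * blockOnes ℓ s b - ((2 ^ (k - ℓ)) ^ d : ℕ)) / ((2 ^ (k - ℓ)) ^ d : ℕ)),
    ← mul_sum, ← mul_assoc, gam_eq_inv, ← mul_pow]
  push_cast
  rw [pow_sub₀ _ two_ne_zero h]

lemma abs_log_card_coarse_fiber_add_integral_ient_le (h : ℓ ≤ k) (t : ConfigSpace d L k) :
    |Real.log #{s | coarse L ℓ (stepFun L k s) = coarse L ℓ (stepFun L k t)} +
        ((2 : ℝ) ^ k) ^ d * ∫ x, ient (coarse L ℓ (stepFun L k t) x)| ≤
      ((2 : ℝ) ^ ℓ * L) ^ d * (2 + Real.log ((2 ^ (k - ℓ)) ^ d : ℕ)) := by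
  have choose_ne_zero (b : Site d L ℓ) :
      (((2 ^ (k - ℓ)) ^ d).choose (blockOnes ℓ t b) : ℝ) ≠ 0 :=
    mod_cast (Nat.choose_pos (blockOnes_le h t b)).ne'
  rw [card_coarse_fiber h, integral_ient_coarse_stepFun h, Nat.cast_prod,
    Real.log_prod fun b _ ↦ choose_ne_zero b, ← sum_add_distrib]
  refine (abs_sum_le_sum_abs _ _).trans ?_
  refine (sum_le_card_nsmul _ _ _ fun b _ ↦
    abs_log_choose_add_mul_ient_le (blockOnes_le h t b)).trans_eq ?_
  simp [mul_add]

end Blocks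

section Assembly

lemma gam_rpow_div {k : ℕ} (hk : k ≠ 0) (ℓ : ℕ) : gam k ^ ((ℓ : ℝ) / k) = gam ℓ := by
  rw [gam_eq_inv, gam_eq_inv, ← Real.rpow_natCast, ← Real.rpow_natCast, ← Real.rpow_neg two_pos.le,
    ← Real.rpow_neg two_pos.le, ← Real.rpow_mul two_pos.le]
  field_simp

lemma gam_rpow_mul_one_sub_div {k ℓ : ℕ} (hk : k ≠ 0) (h : ℓ ≤ k) (d : ℕ) :
    gam k ^ ((d : ℝ) * (1 - (ℓ : ℝ) / k)) = gam (k - ℓ) ^ d := by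
  rw [one_sub_div (mod_cast hk), ← Nat.cast_sub h, mul_comm, Real.rpow_mul (gam_pos k).le,
    gam_rpow_div hk, Real.rpow_natCast]

lemma log_one_div_gam (k : ℕ) : Real.log (1 / gam k) = k * Real.log 2 := by
  rw [gam_eq_inv, one_div, inv_inv, Real.log_pow]

lemma stirling_error_le {k ℓ : ℕ} (hk : k ≠ 0) (h : ℓ ≤ k) (d L : ℕ) :
    ((2 : ℝ) ^ ℓ * L) ^ d * (2 + Real.log ((2 ^ (k - ℓ)) ^ d : ℕ)) ≤
      (d + 4) * ((2 : ℝ) ^ k) ^ d * (L : ℝ) ^ d * (gam (k - ℓ) ^ d * Real.log (1 / gam k)) := by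
  have two_le : 2 ≤ 4 * (k * Real.log 2) := by
    have one_le_k : (1 : ℝ) ≤ k := mod_cast Nat.one_le_iff_ne_zero.2 hk
    nlinarith [Real.log_two_gt_d9]
  have log_card_le : Real.log ((2 ^ (k - ℓ)) ^ d : ℕ) ≤ d * (k * Real.log 2) := by
    push_cast
    rw [Real.log_pow, Real.log_pow]
    gcongr
    exact Nat.sub_le k ℓ
  have card_blocks : ((2 : ℝ) ^ ℓ * L) ^ d = ((2 : ℝ) ^ k) ^ d * (L : ℝ) ^ d * gam (k - ℓ) ^ d := by
    rw [gam_eq_inv, ← mul_pow, ← mul_pow, pow_sub₀ _ two_ne_zero h]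
    field_simp
  rw [log_one_div_gam]
  calc ((2 : ℝ) ^ ℓ * L) ^ d * (2 + Real.log ((2 ^ (k - ℓ)) ^ d : ℕ))
      ≤ ((2 : ℝ) ^ ℓ * L) ^ d * ((d + 4) * (k * Real.log 2)) := by
        gcongr
        linarith
    _ = (d + 4) * ((2 : ℝ) ^ k) ^ d * (L : ℝ) ^ d * (gam (k - ℓ) ^ d * (k * Real.log 2)) := by
        rw [card_blocks]
        ring

lemma mul_gpl_eq {d L : ℕ} [Fact ((0 : ℝ) < L)] {β : ℝ} (hβ : β ≠ 0) (a : ℝ) (J : ℝ → ℝ)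
    (σ : Torus d L → ℝ) :
    β * a * GPL d L β J σ = a * (∫ x, ient (σ x)) -
      β * (a / 2 * kernelForm volume (fun x y ↦ J (torusDist x y)) σ) := by
  rw [GPL, kernelForm]
  field_simp

lemma abs_log_fiber_sum_add_mul_gpl_le {d L k ℓ : ℕ} [Fact ((0 : ℝ) < L)] {β : ℝ} (hβ : β ≠ 0)
    {J : ℝ → ℝ} {Λ R : NNReal} (hJ : LipschitzOnWith Λ J (Set.Ici 0))
    (hsupp : ∀ r : ℝ, R < r → J r = 0) (h : ℓ ≤ k) (s₀ : ConfigSpace d L k) :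
    |Real.log (∑ s ∈ Finset.univ.filter (fun s : ConfigSpace d L k =>
          coarse L ℓ (stepFun L k s) = coarse L ℓ (stepFun L k s₀)),
          Real.exp (-β * Ham L k J s)) +
        β * ((2 : ℝ) ^ k) ^ d * GPL d L β J (coarse L ℓ (stepFun L k s₀))| ≤
      |β| * (((2 : ℝ) ^ k) ^ d / 2 * (3 * ((L : ℝ) ^ d * (discretizationConst d Λ R * gam ℓ)))) +
        ((2 : ℝ) ^ ℓ * L) ^ d * (2 + Real.log ((2 ^ (k - ℓ)) ^ d : ℕ)) := by
  set σ := coarse L ℓ (stepFun L k s₀)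
  set E := Finset.univ.filter fun s : ConfigSpace d L k ↦ coarse L ℓ (stepFun L k s) = σ
  set U := ((2 : ℝ) ^ k) ^ d / 2 * kernelForm volume (fun x y ↦ J (torusDist x y)) σ
  set D := ((2 : ℝ) ^ k) ^ d / 2 * (3 * ((L : ℝ) ^ d * (discretizationConst d Λ R * gam ℓ)))
  have energy (s) (hs : s ∈ E) : |-β * Ham L k J s - β * U| ≤ |β| * D := by
    have bound := abs_ham_add_kernelForm_coarse_le hJ hsupp h s
    rw [(Finset.mem_filter.1 hs).2] at bound
    rw [neg_mul, ← neg_add', ← mul_add, abs_neg, abs_mul]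
    gcongr
  have fiber_sum := abs_log_sum_exp_sub_le ⟨s₀, by simp [E, σ]⟩ energy
  have entropy := abs_log_card_coarse_fiber_add_integral_ient_le h s₀
  rw [mul_gpl_eq hβ]
  refine le_trans (le_of_eq ?_) ((abs_add_le _ _).trans (add_le_add fiber_sum entropy))
  congr 1
  ring

theorem log_fiber_partition_sum_general (d : ℕ) {β : ℝ} (hβ : β ≠ 0) {J : ℝ → ℝ} {Λ R : NNReal}
    (hJ : LipschitzOnWith Λ J (Set.Ici 0)) (hsupp : ∀ r : ℝ, R < r → J r = 0) :
    ∃ c : ℝ, 0 < c ∧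
      ∀ (L k ℓ : ℕ) [Fact ((0 : ℝ) < L)], 0 < k → ℓ ≤ k → ∀ s₀ : ConfigSpace d L k,
      |Real.log (∑ s ∈ Finset.univ.filter (fun s : ConfigSpace d L k =>
            coarse L ℓ (stepFun L k s) = coarse L ℓ (stepFun L k s₀)),
            Real.exp (-β * Ham L k J s)) +
          β * ((2 : ℝ) ^ k) ^ d * GPL d L β J (coarse L ℓ (stepFun L k s₀))| ≤
        c * ((2 : ℝ) ^ k) ^ d * (L : ℝ) ^ d *
          (gam k ^ ((ℓ : ℝ) / (k : ℝ)) +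
            gam k ^ ((d : ℝ) * (1 - (ℓ : ℝ) / (k : ℝ))) * Real.log (1 / gam k)) := by
  set C := |β| * (3 / 2 * discretizationConst d Λ R)
  have C_nonneg : 0 ≤ C := mul_nonneg (abs_nonneg β)
    (mul_nonneg (by norm_num) (discretizationConst_nonneg d Λ R))
  refine ⟨C + (d + 4), by positivity, fun L k ℓ _ hk h s₀ ↦ ?_⟩
  rw [gam_rpow_div hk.ne', gam_rpow_mul_one_sub_div hk.ne' h]
  have log_nonneg : 0 ≤ Real.log (1 / gam k) :=
    Real.log_nonneg ((one_le_div (gam_pos k)).2 (gam_le_one k))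
  set G := ((2 : ℝ) ^ k) ^ d
  set B := gam (k - ℓ) ^ d * Real.log (1 / gam k)
  have B_nonneg : 0 ≤ B := mul_nonneg (pow_pos (gam_pos _) d).le log_nonneg
  calc _ ≤ |β| * (G / 2 * (3 * ((L : ℝ) ^ d * (discretizationConst d Λ R * gam ℓ)))) +
          ((2 : ℝ) ^ ℓ * L) ^ d * (2 + Real.log ((2 ^ (k - ℓ)) ^ d : ℕ)) :=
        abs_log_fiber_sum_add_mul_gpl_le hβ hJ hsupp h s₀
    _ ≤ C * G * (L : ℝ) ^ d * gam ℓ + (d + 4) * G * (L : ℝ) ^ d * B :=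
        add_le_add (by unfold C; linarith) (stirling_error_le hk.ne' h d L)
    _ ≤ C * G * (L : ℝ) ^ d * (gam ℓ + B) + (d + 4) * G * (L : ℝ) ^ d * (gam ℓ + B) := by
        have := (gam_pos ℓ).le
        gcongr <;> linarith
    _ = (C + (d + 4)) * G * (L : ℝ) ^ d * (gam ℓ + B) := by ring

end Assembly

/-- **The constrained partition sum over a coarse-grained fiber**: there is a constant `c > 0`,
depending only on `d`, `β` and `J`, such that for every coarse-grained configuration
`σ_δ = π^{(δ)}(s₀)`,
`| log ( Σ_{s ∈ E(σ_δ)} e^{−βH(s)} ) + β γ^{−d} F(σ_δ) | ≤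
  c γ^{−d} L^d (γ^δ + γ^{d(1−δ)} log(1/γ))`, where `γ = 2^{−k}` and `δ = ℓ/k`. -/
theorem log_fiber_partition_sum (d : ℕ) (hd : 1 ≤ d) (β : ℝ) (hβ : 0 < β)
    (J : ℝ → ℝ) (hJ : KacPotential d J) :
    ∃ c : ℝ, 0 < c ∧
      ∀ (L k ℓ : ℕ) [Fact ((0:ℝ) < L)], 2 ≤ L → 1 ≤ ℓ → ℓ < k →
      ∀ s₀ : ConfigSpace d L k,
      |Real.log (∑ s ∈ Finset.univ.filter (fun s : ConfigSpace d L k =>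
            coarse L ℓ (stepFun L k s) = coarse L ℓ (stepFun L k s₀)),
            Real.exp (-β * Ham L k J s))
          + β * ((2:ℝ) ^ k) ^ d * GPL d L β J (coarse L ℓ (stepFun L k s₀))|
        ≤ c * ((2:ℝ) ^ k) ^ d * (L:ℝ) ^ d *
            (gam k ^ ((ℓ:ℝ) / (k:ℝ))
              + gam k ^ ((d:ℝ) * (1 - (ℓ:ℝ) / (k:ℝ))) * Real.log (1 / gam k)) := by
  obtain ⟨Λ, hΛ⟩ := hJ.exists_lipschitzOnWith
  obtain ⟨c, hc, bound⟩ := log_fiber_partition_sum_general d hβ.ne' hΛ (R := 1) hJ.support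
  exact ⟨c, hc, fun L k ℓ _ _ _ hℓk ↦ bound L k ℓ hℓk.pos hℓk.le⟩
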